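/- Let K ⊂ ℝⁿ be compact and let q_i > 0 on K for i = 1,…,N. Then the optimal value f̂ of the generalized moment problem equals the optimal value f* of the rational optimization problem, i.e. f̂ = f*. -/

import Mathlib

open MeasureTheory MvPolynomial

/-!
By Stone–Weierstrass a finite measure on a compact set is determined by its moments, so the moment
conditions say that all the measures `qᵢ dμᵢ` are one and the same probability measure `ν` on `K`.
The objective is then `∑ ∫ pᵢ / qᵢ dν = ∫ f dν`, and the average of `f` is at least some value of
`f` on `K`. Conversely every value `f x` is attained by the Dirac masses `μᵢ = δₓ / qᵢ(x)`.
-/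

section CompactSupport

variable {E : Type*} [TopologicalSpace E] [MeasurableSpace E] {K : Set E}

theorem integrable_of_continuousOn_of_isCompact [OpensMeasurableSpace E] [T2Space E]
    {F : Type*} [NormedAddCommGroup F] {μ : Measure E} [IsFiniteMeasureOnCompacts μ]
    (hK : IsCompact K) (hμ : μ Kᶜ = 0) {φ : E → F} (hφ : ContinuousOn φ K) : Integrable φ μ := by
  have h_restrict : μ.restrict K = μ :=
    Measure.restrict_eq_self_of_ae_mem (mem_ae_iff.mpr hμ)
  simpa only [IntegrableOn, h_restrict] using hφ.integrableOn_compact (μ := μ) hK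

theorem dist_integral_le_of_forall_mem_norm_sub_le {α F : Type*} [MeasurableSpace α]
    [NormedAddCommGroup F] [NormedSpace ℝ F] {s : Set α} {μ : Measure α} [IsFiniteMeasure μ]
    (hμ : μ sᶜ = 0) {φ ψ : α → F} (hφ : Integrable φ μ) (hψ : Integrable ψ μ) {ε : ℝ}
    (h : ∀ x ∈ s, ‖φ x - ψ x‖ ≤ ε) :
    dist (∫ x, φ x ∂μ) (∫ x, ψ x ∂μ) ≤ ε * μ.real Set.univ := by
  rw [dist_eq_norm, ← integral_sub hφ hψ]
  have hs : ∀ᵐ x ∂μ, x ∈ s := mem_ae_iff.mpr hμ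
  exact norm_integral_le_of_norm_le_const (hs.mono h)

theorem ext_of_isCompact_of_forall_mem_subalgebra_integral_eq [BorelSpace E]
    [HasOuterApproxClosed E] {μ ν : Measure E} [IsFiniteMeasure μ] [IsFiniteMeasure ν]
    (hK : IsCompact K) (hμ : μ Kᶜ = 0) (hν : ν Kᶜ = 0)
    {A : Subalgebra ℝ C(E, ℝ)} (hA : A.SeparatesPoints)
    (h : ∀ g ∈ A, ∫ x, g x ∂μ = ∫ x, g x ∂ν) : μ = ν := by
  have hT2 : T2Space E := ⟨fun x y hxy => by
    obtain ⟨_, ⟨g, -, rfl⟩, hg⟩ := hA hxy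
    exact separated_by_continuous g.continuous hg⟩
  refine ext_of_forall_integral_eq_of_IsFiniteMeasure fun φ => eq_of_forall_dist_le fun δ hδ => ?_
  obtain ⟨ε, hε, hεδ⟩ := exists_pos_mul_lt hδ (μ.real Set.univ + ν.real Set.univ)
  obtain ⟨g, hgA, hg⟩ :=
    ContinuousMap.exists_mem_subalgebra_near_continuous_of_isCompact_of_separatesPoints
      hA φ.toContinuousMap hK hε
  have hφg : ∀ {ρ : Measure E} [IsFiniteMeasure ρ], ρ Kᶜ = 0 →
      dist (∫ x, g x ∂ρ) (∫ x, φ x ∂ρ) ≤ ε * ρ.real Set.univ := fun hρ =>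
    dist_integral_le_of_forall_mem_norm_sub_le hρ
      (integrable_of_continuousOn_of_isCompact hK hρ g.continuous.continuousOn)
      (integrable_of_continuousOn_of_isCompact hK hρ φ.continuous.continuousOn)
      fun x hx => (hg x hx).le
  calc dist (∫ x, φ x ∂μ) (∫ x, φ x ∂ν)
      ≤ dist (∫ x, g x ∂μ) (∫ x, φ x ∂μ) + dist (∫ x, g x ∂μ) (∫ x, φ x ∂ν) :=
        dist_triangle_left _ _ _
    _ ≤ ε * μ.real Set.univ + ε * ν.real Set.univ :=
        add_le_add (hφg hμ) (h g hgA ▸ hφg hν)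
    _ = (μ.real Set.univ + ν.real Set.univ) * ε := by ring
    _ ≤ δ := hεδ.le

end CompactSupport

section Moments

variable {ι : Type*}

/-- Polynomials in the variables `ι`, as an algebra of continuous functions on `ι → ℝ`. -/
noncomputable def mvPolynomialToContinuousMap : MvPolynomial ι ℝ →ₐ[ℝ] C(ι → ℝ, ℝ) :=
  aeval fun i => ⟨fun x => x i, continuous_apply i⟩

theorem mvPolynomialToContinuousMap_apply (h : MvPolynomial ι ℝ) (x : ι → ℝ) :
    mvPolynomialToContinuousMap h x = eval x h := by
  have h_eval : (ContinuousMap.evalAlgHom ℝ ℝ x).comp mvPolynomialToContinuousMap = aeval x :=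
    algHom_ext fun i => by simp [mvPolynomialToContinuousMap]
  exact DFunLike.congr_fun h_eval h

theorem separatesPoints_range_mvPolynomialToContinuousMap :
    (mvPolynomialToContinuousMap (ι := ι)).range.SeparatesPoints := by
  intro x y hxy
  obtain ⟨i, hi⟩ := Function.ne_iff.mp hxy
  exact ⟨_, ⟨mvPolynomialToContinuousMap (X i), ⟨X i, rfl⟩, rfl⟩,
    by simpa only [mvPolynomialToContinuousMap_apply, eval_X] using hi⟩

theorem integral_eval_eq_sum_coeff_mul_moment [Fintype ι] {μ : Measure (ι → ℝ)}
    (hμ : ∀ α : ι →₀ ℕ, Integrable (fun x => ∏ t, x t ^ α t) μ) (h : MvPolynomial ι ℝ) :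
    ∫ x, eval x h ∂μ = ∑ α ∈ h.support, h.coeff α * ∫ x, ∏ t, x t ^ α t ∂μ := by
  simp only [eval_eq', ← integral_const_mul]
  exact integral_finsetSum _ fun α _ => (hμ α).const_mul _

theorem ext_of_isCompact_of_forall_moment_eq [Fintype ι] {K : Set (ι → ℝ)}
    {μ ν : Measure (ι → ℝ)} [IsFiniteMeasure μ] [IsFiniteMeasure ν] (hK : IsCompact K)
    (hμ : μ Kᶜ = 0) (hν : ν Kᶜ = 0)
    (h : ∀ α : ι →₀ ℕ, ∫ x, ∏ t, x t ^ α t ∂μ = ∫ x, ∏ t, x t ^ α t ∂ν) : μ = ν := by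
  have h_cont (α : ι →₀ ℕ) : ContinuousOn (fun x : ι → ℝ => ∏ t, x t ^ α t) K := by fun_prop
  refine ext_of_isCompact_of_forall_mem_subalgebra_integral_eq hK hμ hν
    separatesPoints_range_mvPolynomialToContinuousMap ?_
  rintro _ ⟨f, rfl⟩
  have hμ_int (α : ι →₀ ℕ) : Integrable (fun x => ∏ t, x t ^ α t) μ :=
    integrable_of_continuousOn_of_isCompact hK hμ (h_cont α)
  have hν_int (α : ι →₀ ℕ) : Integrable (fun x => ∏ t, x t ^ α t) ν :=
    integrable_of_continuousOn_of_isCompact hK hν (h_cont α)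
  change ∫ x, mvPolynomialToContinuousMap f x ∂μ = ∫ x, mvPolynomialToContinuousMap f x ∂ν
  simp only [mvPolynomialToContinuousMap_apply, integral_eval_eq_sum_coeff_mul_moment hμ_int,
    integral_eval_eq_sum_coeff_mul_moment hν_int, h]

end Moments

theorem integral_withDensity_ofReal {α : Type*} [MeasurableSpace α] {μ : Measure α} {w : α → ℝ}
    (hw : AEMeasurable w μ) (hw_nonneg : 0 ≤ᵐ[μ] w) (φ : α → ℝ) :
    ∫ x, φ x ∂μ.withDensity (fun x => ENNReal.ofReal (w x)) = ∫ x, φ x * w x ∂μ := by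
  rw [integral_withDensity_eq_integral_toReal_smul₀ hw.ennreal_ofReal (by simp)]
  refine integral_congr_ae (hw_nonneg.mono fun x hx => ?_)
  simp only [ENNReal.toReal_ofReal hx, smul_eq_mul, mul_comm]

theorem integral_smul_dirac_ofReal_inv {α : Type*} [MeasurableSpace α]
    [MeasurableSingletonClass α] (a : α) {c : ℝ} (hc : 0 ≤ c) (φ : α → ℝ) :
    ∫ x, φ x ∂(ENNReal.ofReal c⁻¹ • Measure.dirac a) = φ a / c := by
  rw [integral_smul_measure, integral_dirac, ENNReal.toReal_ofReal (inv_nonneg.mpr hc),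
    smul_eq_mul, div_eq_inv_mul]

section GeneralizedMomentProblem

variable {ι κ : Type*} [Fintype ι] {K : Set (ι → ℝ)} {p q : κ → (ι → ℝ) → ℝ} {i₀ : κ}
  {μ : κ → Measure (ι → ℝ)}

/-- Feasibility of a family of measures for the generalized moment problem on `K` with
denominators `q`. The distinguished index `i₀` carries the normalisation and plays the role of the
index `1` in the paper; being supported on `K` is encoded as `μ i Kᶜ = 0`. -/
def IsGMPFeasible (K : Set (ι → ℝ)) (q : κ → (ι → ℝ) → ℝ) (i₀ : κ) (μ : κ → Measure (ι → ℝ)) :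
    Prop :=
  (∀ i, IsFiniteMeasure (μ i)) ∧
  (∀ i, μ i Kᶜ = 0) ∧
  ∫ x, q i₀ x ∂μ i₀ = 1 ∧
  ∀ i, ∀ α : ι →₀ ℕ,
    ∫ x, (∏ t, x t ^ α t) * q i x ∂μ i = ∫ x, (∏ t, x t ^ α t) * q i₀ x ∂μ i₀

theorem isGMPFeasible_dirac (hq : ∀ i, ∀ x ∈ K, 0 < q i x) {x : ι → ℝ} (hx : x ∈ K) :
    IsGMPFeasible K q i₀ fun i => ENNReal.ofReal (q i x)⁻¹ • Measure.dirac x := by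
  refine ⟨fun i => Measure.smul_finite _ ENNReal.ofReal_ne_top, fun i => ?_, ?_, fun i α => ?_⟩
  · simp [hx]
  · rw [integral_smul_dirac_ofReal_inv x (hq i₀ x hx).le, div_self (hq i₀ x hx).ne']
  · rw [integral_smul_dirac_ofReal_inv x (hq i x hx).le,
      integral_smul_dirac_ofReal_inv x (hq i₀ x hx).le,
      mul_div_cancel_right₀ _ (hq i x hx).ne', mul_div_cancel_right₀ _ (hq i₀ x hx).ne']

theorem IsGMPFeasible.exists_isProbabilityMeasure_integral_eq (hμ : IsGMPFeasible K q i₀ μ)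
    (hK : IsCompact K) (hq_cont : ∀ i, ContinuousOn (q i) K) (hq : ∀ i, ∀ x ∈ K, 0 < q i x) :
    ∃ ν : Measure (ι → ℝ), IsProbabilityMeasure ν ∧ ν Kᶜ = 0 ∧
      ∀ i, ∀ φ : (ι → ℝ) → ℝ, ∫ x, φ x * q i x ∂μ i = ∫ x, φ x ∂ν := by
  obtain ⟨h_finite, h_supp, h_one, h_moment⟩ := hμ
  let ν (i : κ) : Measure (ι → ℝ) := (μ i).withDensity fun x => ENNReal.ofReal (q i x)
  have hq_int (i : κ) : Integrable (q i) (μ i) :=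
    integrable_of_continuousOn_of_isCompact hK (h_supp i) (hq_cont i)
  have h_mem (i : κ) : ∀ᵐ x ∂μ i, x ∈ K := mem_ae_iff.mpr (h_supp i)
  have hν_integral (i : κ) (φ : (ι → ℝ) → ℝ) : ∫ x, φ x ∂ν i = ∫ x, φ x * q i x ∂μ i :=
    integral_withDensity_ofReal (hq_int i).aemeasurable
      ((h_mem i).mono fun x hx => (hq i x hx).le) φ
  have hν_finite (i : κ) : IsFiniteMeasure (ν i) := isFiniteMeasure_withDensity_ofReal (hq_int i).2
  have hν_supp (i : κ) : ν i Kᶜ = 0 := withDensity_absolutelyContinuous _ _ (h_supp i)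
  have hν_eq (i : κ) : ν i = ν i₀ :=
    ext_of_isCompact_of_forall_moment_eq hK (hν_supp i) (hν_supp i₀) fun α => by
      rw [hν_integral, hν_integral, h_moment]
  have hν_univ : (ν i₀).real Set.univ = 1 := by
    simpa [h_one] using hν_integral i₀ fun _ => 1
  exact ⟨ν i₀, isProbabilityMeasure_iff_real.mpr hν_univ, hν_supp i₀,
    fun i φ => by rw [← hν_integral, hν_eq]⟩

theorem IsGMPFeasible.exists_sum_div_le [Fintype κ] (hμ : IsGMPFeasible K q i₀ μ)
    (hK : IsCompact K) (hp_cont : ∀ i, ContinuousOn (p i) K)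
    (hq_cont : ∀ i, ContinuousOn (q i) K) (hq : ∀ i, ∀ x ∈ K, 0 < q i x) :
    ∃ x ∈ K, ∑ i, p i x / q i x ≤ ∑ i, ∫ x, p i x ∂μ i := by
  obtain ⟨ν, hν, hν_supp, hν_integral⟩ :=
    hμ.exists_isProbabilityMeasure_integral_eq hK hq_cont hq
  have hpq_int (i : κ) : Integrable (fun x => p i x / q i x) ν :=
    integrable_of_continuousOn_of_isCompact hK hν_supp
      ((hp_cont i).div (hq_cont i) fun x hx => (hq i x hx).ne')
  have h_integral (i : κ) : ∫ x, p i x ∂μ i = ∫ x, p i x / q i x ∂ν := by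
    have h_mem : ∀ᵐ x ∂μ i, x ∈ K := mem_ae_iff.mpr (hμ.2.1 i)
    rw [← hν_integral i]
    exact integral_congr_ae (h_mem.mono fun x hx => (div_mul_cancel₀ _ (hq i x hx).ne').symm)
  obtain ⟨x, hx, hx_le⟩ :=
    exists_notMem_null_le_integral (integrable_finsetSum _ fun i _ => hpq_int i) hν_supp
  refine ⟨x, Set.notMem_compl_iff.mp hx, ?_⟩
  simpa only [h_integral, integral_finsetSum _ fun i _ => hpq_int i] using hx_le

theorem dense_gmp_value_eq_rational_value_general [Fintype κ] (hK : IsCompact K)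
    (hp_cont : ∀ i, ContinuousOn (p i) K) (hq_cont : ∀ i, ContinuousOn (q i) K)
    (hq : ∀ i, ∀ x ∈ K, 0 < q i x) :
    sInf {v : ℝ | ∃ μ, IsGMPFeasible K q i₀ μ ∧ v = ∑ i, ∫ x, p i x ∂μ i} =
      sInf ((fun x => ∑ i, p i x / q i x) '' K) := by
  apply csInf_eq_csInf_of_forall_exists_le
  · rintro _ ⟨μ, hμ, rfl⟩
    exact Set.exists_mem_image.mpr (hμ.exists_sum_div_le hK hp_cont hq_cont hq)
  · rintro _ ⟨x, hx, rfl⟩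
    refine ⟨_, ⟨_, isGMPFeasible_dirac hq hx, rfl⟩, le_of_eq ?_⟩
    exact Finset.sum_congr rfl fun i _ => integral_smul_dirac_ofReal_inv x (hq i x hx).le (p i)

end GeneralizedMomentProblem

/-- **Theorem 1 (dense GMP formulation).**
Let `K ⊆ ℝⁿ` be the compact basic semialgebraic set defined by `g₁,…,g_m`, and let
`p_i, q_i` be polynomials with `q_i > 0` on `K` for `i = 1,…,N`.  Then the optimal value
`f̂` of the generalized moment problem equals the optimal value `f* = inf_{x ∈ K} Σᵢ pᵢ/qᵢ`
of the rational optimization problem. -/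
theorem dense_gmp_value_eq_rational_value
    (n N m : ℕ) (hN : 0 < N)
    (g : Fin m → MvPolynomial (Fin n) ℝ)
    (K : Set (Fin n → ℝ))
    (hK : K = {x | ∀ j, 0 ≤ eval x (g j)})
    (hKcpt : IsCompact K)
    (p q : Fin N → MvPolynomial (Fin n) ℝ)
    (hqpos : ∀ i, ∀ x ∈ K, 0 < eval x (q i))
    (f : (Fin n → ℝ) → ℝ)
    (hf : f = fun x => ∑ i, eval x (p i) / eval x (q i))
    (fstar : ℝ)
    (hfstar : fstar = sInf (f '' K))
    (fhat : ℝ)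
    (hfhat : fhat = sInf {v : ℝ |
      ∃ μ : Fin N → Measure (Fin n → ℝ),
        (∀ i, IsFiniteMeasure (μ i)) ∧
        (∀ i, μ i Kᶜ = 0) ∧
        (∫ x, eval x (q ⟨0, hN⟩) ∂(μ ⟨0, hN⟩)) = 1 ∧
        (∀ i, ∀ α : Fin n →₀ ℕ,
          ∫ x, (∏ t, x t ^ α t) * eval x (q i) ∂(μ i)
            = ∫ x, (∏ t, x t ^ α t) * eval x (q ⟨0, hN⟩) ∂(μ ⟨0, hN⟩)) ∧
        v = ∑ i, ∫ x, eval x (p i) ∂(μ i)}) :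
    fhat = fstar := by
  subst hf hfstar hfhat
  simpa only [IsGMPFeasible, and_assoc] using
    dense_gmp_value_eq_rational_value_general (i₀ := ⟨0, hN⟩) hKcpt
      (fun i => (continuous_eval (p i)).continuousOn)
      (fun i => (continuous_eval (q i)).continuousOn) hqpos
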